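/- arXiv:2307.10418 — 3 statements merged into one kernel-verified Lean document; each statement's English description precedes it below -/
import Mathlib

section
/- Let 𝔤 be a finite-dimensional complex Lie algebra, let f, g ∈ S(𝔤) be semi-invariants (with weights χ_f, χ_g ∈ 𝔤*), and let a ∈ 𝔤*. Then for all λ, μ ∈ ℂ the shifted polynomials F(x) = f(a + λx) and G(x) = g(a + μx) are in involution with respect to the frozen argument bracket at a: {F, G}_a(x) = 0 for every x ∈ 𝔤*. -/
/-- A function on the dual space `𝔤* ≅ L →L[ℂ] ℂ` is a polynomial function
(i.e. corresponds to an element of the symmetric algebra `S(𝔤)`) if it lies in the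
`ℂ`-subalgebra of functions generated by the evaluations `x ↦ ⟨x, ξ⟩`, `ξ ∈ 𝔤`. -/
def IsPolyFun (L : Type*) [NormedAddCommGroup L] [NormedSpace ℂ L]
    (p : (L →L[ℂ] ℂ) → ℂ) : Prop :=
  p ∈ Algebra.adjoin ℂ (Set.range fun ξ : L => fun x : L →L[ℂ] ℂ => x ξ)

/-- `dp` represents the differential of `p : 𝔤* → ℂ`, with `dp x ∈ 𝔤` identified with a
linear functional on `𝔤*` via the canonical isomorphism `𝔤 ≅ 𝔤**`:
`(fderiv ℂ p x) v = ⟨v, dp x⟩` for all `v ∈ 𝔤*`. -/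
def RepDeriv (L : Type*) [NormedAddCommGroup L] [NormedSpace ℂ L]
    (p : (L →L[ℂ] ℂ) → ℂ) (dp : (L →L[ℂ] ℂ) → L) : Prop :=
  ∀ x v : L →L[ℂ] ℂ, fderiv ℂ p x v = v (dp x)

/-- The bilinear map `B` is a Lie bracket on the complex vector space `L` (which carries a
norm only in order to speak about differentials and analyticity; in finite dimension all
norms are equivalent): `B` is alternating and satisfies the Jacobi identity. -/
def IsLieBracket (L : Type*) [NormedAddCommGroup L] [NormedSpace ℂ L]
    (B : L →ₗ[ℂ] L →ₗ[ℂ] L) : Prop :=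
  (∀ ξ : L, B ξ ξ = 0) ∧
    ∀ ξ η ζ : L, B ξ (B η ζ) = B (B ξ η) ζ + B η (B ξ ζ)

/-- `g ∈ S(𝔤)` is a semi-invariant with weight `χ ∈ 𝔤*`:
`⟨x, [ξ, dg(x)]⟩ = χ(ξ) · g(x)` for all `ξ ∈ 𝔤`, `x ∈ 𝔤*`. -/
def IsSemiInvariant (L : Type*) [NormedAddCommGroup L] [NormedSpace ℂ L]
    (B : L →ₗ[ℂ] L →ₗ[ℂ] L) (g : (L →L[ℂ] ℂ) → ℂ) (χ : L →L[ℂ] ℂ) : Prop :=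
  IsPolyFun L g ∧ g ≠ 0 ∧
    ∃ dg : (L →L[ℂ] ℂ) → L, RepDeriv L g dg ∧
      ∀ (ξ : L) (x : L →L[ℂ] ℂ), x (B ξ (dg x)) = χ ξ * g x

open Polynomial Filter Topology

section Analytic

variable {E : Type*} [NormedAddCommGroup E] [NormedSpace ℂ E]

/-- An entire function vanishing wherever a nonzero continuous function does not vanish is zero. -/
theorem eq_zero_of_forall_ne_zero_imp {g h : E → ℂ} (hg : Continuous g) (hg0 : g ≠ 0)
    (hh : AnalyticOnNhd ℂ h Set.univ) (H : ∀ x, g x ≠ 0 → h x = 0) (x : E) : h x = 0 := by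
  obtain ⟨y, hy⟩ := Function.ne_iff.mp hg0
  have hev : h =ᶠ[𝓝 y] fun _ => 0 :=
    (hg.continuousAt.eventually_ne hy).mono H
  exact congrFun (hh.eq_of_eventuallyEq analyticOnNhd_const hev) x

theorem AnalyticOnNhd.fderiv_apply_const {f : E → ℂ} (hf : AnalyticOnNhd ℂ f Set.univ) (v : E) :
    AnalyticOnNhd ℂ (fun x => fderiv ℂ f x v) Set.univ :=
  fun x hx => (ContinuousLinearMap.apply ℂ ℂ v).analyticAt _ |>.comp (hf.fderiv x hx)

theorem Differentiable.hasDerivAt_comp_add_smul {f : E → ℂ} (hf : Differentiable ℂ f)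
    (x v : E) (t : ℂ) :
    HasDerivAt (fun s : ℂ => f (x + s • v)) (fderiv ℂ f (x + t • v) v) t := by
  have h : HasDerivAt (fun s : ℂ => x + s • v) v t := by
    simpa using ((hasDerivAt_id t).smul_const v).const_add x
  exact (hf (x + t • v)).hasFDerivAt.comp_hasDerivAt t h

/-- A function whose derivative in the direction `v` vanishes is invariant under translations
along `v`. -/
theorem Differentiable.apply_add_smul_eq {f : E → ℂ} (hf : Differentiable ℂ f) {v : E}
    (hv : ∀ x, fderiv ℂ f x v = 0) (x : E) (t : ℂ) : f (x + t • v) = f x := by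
  have h := is_const_of_deriv_eq_zero
    (f := fun s : ℂ => f (x + s • v))
    (fun s => (hf.hasDerivAt_comp_add_smul x v s).differentiableAt)
    (fun s => (hf.hasDerivAt_comp_add_smul x v s).deriv.trans (hv _)) t 0
  simpa using h

end Analytic

/-- A polynomial proportional to its derivative has zero derivative. -/
theorem Polynomial.derivative_eq_zero_of_mul_eq {P : ℂ[X]} {b c : ℂ} (hb : b ≠ 0)
    (h : C b * derivative P = C c * P) : derivative P = 0 := by
  by_cases hP : P = 0
  · simp [hP]
  by_cases hc : c = 0
  · simpa [hc, hb] using h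
  have hdeg := congrArg degree h
  rw [degree_C_mul hb, degree_C_mul hc] at hdeg
  exact absurd hdeg (degree_derivative_lt hP).ne

section PolyFun

variable {L : Type*} [NormedAddCommGroup L] [NormedSpace ℂ L]

theorem IsPolyFun.analyticOnNhd {p : (L →L[ℂ] ℂ) → ℂ} (hp : IsPolyFun L p) :
    AnalyticOnNhd ℂ p Set.univ := by
  refine Algebra.adjoin_induction (p := fun q _ => AnalyticOnNhd ℂ q Set.univ)
    ?_ ?_ ?_ ?_ hp
  · rintro _ ⟨ξ, rfl⟩
    exact (ContinuousLinearMap.apply ℂ ℂ ξ).analyticOnNhd _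
  · exact fun r => analyticOnNhd_const
  · exact fun _ _ _ _ h₁ h₂ => h₁.add h₂
  · exact fun _ _ _ _ h₁ h₂ => h₁.mul h₂

theorem IsPolyFun.exists_polynomial_line {p : (L →L[ℂ] ℂ) → ℂ} (hp : IsPolyFun L p)
    (x v : L →L[ℂ] ℂ) : ∃ P : ℂ[X], ∀ t, p (x + t • v) = P.eval t := by
  refine Algebra.adjoin_induction
    (p := fun q _ => ∃ P : ℂ[X], ∀ t : ℂ, q (x + t • v) = P.eval t) ?_ ?_ ?_ ?_ hp
  · rintro _ ⟨ξ, rfl⟩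
    exact ⟨C (x ξ) + X * C (v ξ), fun t => by simp [mul_comm t]⟩
  · exact fun r => ⟨C r, fun t => by simp⟩
  · rintro _ _ _ _ ⟨P, hP⟩ ⟨Q, hQ⟩
    exact ⟨P + Q, fun t => by simp [hP, hQ]⟩
  · rintro _ _ _ _ ⟨P, hP⟩ ⟨Q, hQ⟩
    exact ⟨P * Q, fun t => by simp [hP, hQ]⟩

end PolyFun

theorem IsLieBracket.skew {L : Type*} [NormedAddCommGroup L] [NormedSpace ℂ L]
    {B : L →ₗ[ℂ] L →ₗ[ℂ] L} (hB : IsLieBracket L B) (ξ η : L) : B ξ η = -B η ξ := by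
  have h := hB.1 (ξ + η)
  simp only [map_add, LinearMap.add_apply, hB.1, zero_add, add_zero] at h
  exact eq_neg_of_add_eq_zero_right h

namespace IsSemiInvariant

variable {L : Type*} [NormedAddCommGroup L] [NormedSpace ℂ L]
  {B : L →ₗ[ℂ] L →ₗ[ℂ] L} {f g : (L →L[ℂ] ℂ) → ℂ} {χf χg : L →L[ℂ] ℂ}

/-- A semi-invariant is constant along its own weight. -/
theorem fderiv_weight_self (hB : IsLieBracket L B) (hg : IsSemiInvariant L B g χg)
    (x : L →L[ℂ] ℂ) : fderiv ℂ g x χg = 0 := by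
  obtain ⟨hpoly, hg0, dg, hdg, hsemi⟩ := hg
  have hana := hpoly.analyticOnNhd
  refine eq_zero_of_forall_ne_zero_imp (continuousOn_univ.mp hana.continuousOn) hg0
    (hana.fderiv_apply_const χg) (fun y hy => ?_) x
  have h := hsemi (dg y) y
  rw [hB.1, map_zero, ← hdg] at h
  exact (mul_eq_zero.mp h.symm).resolve_right hy

/-- The two expressions of the Lie–Poisson bracket of two semi-invariants agree. -/
theorem mul_fderiv_weight (hB : IsLieBracket L B) (hf : IsSemiInvariant L B f χf)
    (hg : IsSemiInvariant L B g χg) (x : L →L[ℂ] ℂ) :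
    g x * fderiv ℂ f x χg = -fderiv ℂ g x χf * f x := by
  obtain ⟨-, -, df, hdf, hfs⟩ := hf
  obtain ⟨-, -, dg, hdg, hgs⟩ := hg
  rw [hdf, hdg, mul_comm, ← hgs, neg_mul, ← hfs, hB.skew, map_neg]

/-- A semi-invariant is constant along the weight of any other semi-invariant. -/
theorem fderiv_weight (hB : IsLieBracket L B) (hf : IsSemiInvariant L B f χf)
    (hg : IsSemiInvariant L B g χg) (x : L →L[ℂ] ℂ) : fderiv ℂ f x χg = 0 := by
  have hfa := hf.1.analyticOnNhd
  have hga := hg.1.analyticOnNhd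
  have hfd : Differentiable ℂ f := differentiableOn_univ.mp hfa.differentiableOn
  have hgd : Differentiable ℂ g := differentiableOn_univ.mp hga.differentiableOn
  refine eq_zero_of_forall_ne_zero_imp hgd.continuous hg.2.1
    (hfa.fderiv_apply_const χg) (fun y hy => ?_) x
  have hconst := hgd.apply_add_smul_eq (hg.fderiv_weight_self hB)
  have hconst' (t : ℂ) : fderiv ℂ g (y + t • χg) = fderiv ℂ g y := by
    rw [← fderiv_comp_add_right, funext fun z => hconst z t]
  obtain ⟨P, hP⟩ := hf.1.exists_polynomial_line y χg
  have hP' (t : ℂ) : P.derivative.eval t = fderiv ℂ f (y + t • χg) χg := by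
    have h := hfd.hasDerivAt_comp_add_smul y χg t
    simp only [hP] at h
    exact (P.hasDerivAt t).unique h
  have hder : P.derivative = 0 := by
    refine derivative_eq_zero_of_mul_eq hy (c := -fderiv ℂ g y χf) (Polynomial.funext fun t => ?_)
    have h := hf.mul_fderiv_weight hB hg (y + t • χg)
    rw [hconst, hconst', hP, ← hP'] at h
    simpa using h
  have h := hP' 0
  have hy0 : y + (0 : ℂ) • χg = y := by ext; simp
  rw [hder, eval_zero, hy0] at h
  exact h.symm

end IsSemiInvariant

/-- The differential of `x ↦ p (a + c x)` is `c · dp (a + c x)`. -/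
theorem RepDeriv.shift_eq {L : Type*} [NormedAddCommGroup L] [NormedSpace ℂ L]
    {p : (L →L[ℂ] ℂ) → ℂ} {dp dP : (L →L[ℂ] ℂ) → L} (hp : Differentiable ℂ p)
    (hdp : RepDeriv L p dp) {a : L →L[ℂ] ℂ} {c : ℂ}
    (hdP : RepDeriv L (fun x => p (a + c • x)) dP) (x : L →L[ℂ] ℂ) :
    dP x = c • dp (a + c • x) := by
  refine (SeparatingDual.eq_iff_forall_dual_eq (R := ℂ)).mpr fun v => ?_
  have hin : HasFDerivAt (fun y : L →L[ℂ] ℂ => a + c • y)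
      (c • ContinuousLinearMap.id ℂ (L →L[ℂ] ℂ)) x :=
    ((hasFDerivAt_id x).const_smul c).const_add a
  have h := ((hp (a + c • x)).hasFDerivAt.comp x hin).fderiv
  rw [← hdP, map_smul, ← hdp]
  refine (congrArg (fun T => T v) h).trans ?_
  simp

/-- Shifts of semi-invariants are in involution w.r.t. the frozen argument bracket
`{F,G}_a(x) = ⟨a, [dF(x), dG(x)]⟩`: for semi-invariants `f, g` and `λ, μ ∈ ℂ`, the functions
`F(x) = f(a + λx)` and `G(x) = g(a + μx)` satisfy `{F,G}_a(x) = 0` for all `x ∈ 𝔤*`. -/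
theorem shifts_of_semiInvariants_frozen_involution
    {L : Type*} [NormedAddCommGroup L] [NormedSpace ℂ L] [FiniteDimensional ℂ L]
    (B : L →ₗ[ℂ] L →ₗ[ℂ] L) (hB : IsLieBracket L B)
    (f g : (L →L[ℂ] ℂ) → ℂ) (χf χg : L →L[ℂ] ℂ)
    (hf : IsSemiInvariant L B f χf) (hg : IsSemiInvariant L B g χg)
    (a : L →L[ℂ] ℂ) (lam mu : ℂ)
    (F G : (L →L[ℂ] ℂ) → ℂ)
    (hF : F = fun x => f (a + lam • x)) (hG : G = fun x => g (a + mu • x))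
    (dF dG : (L →L[ℂ] ℂ) → L)
    (hdF : RepDeriv L F dF) (hdG : RepDeriv L G dG) :
    ∀ x : L →L[ℂ] ℂ, a (B (dF x) (dG x)) = 0 := by
  intro x
  have hfd : Differentiable ℂ f := differentiableOn_univ.mp hf.1.analyticOnNhd.differentiableOn
  have hgd : Differentiable ℂ g := differentiableOn_univ.mp hg.1.analyticOnNhd.differentiableOn
  have hfw := hf.fderiv_weight hB hg
  have hgw := hg.fderiv_weight hB hf
  have hga := hg.1.analyticOnNhd
  obtain ⟨-, -, df, hdf, hfs⟩ := hf
  obtain ⟨-, -, dg, hdg, hgs⟩ := hg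
  subst hF hG
  rw [hdf.shift_eq hfd hdF, hdg.shift_eq hgd hdG]
  set u := df (a + lam • x) with hu
  let w : L →L[ℂ] ℂ := LinearMap.toContinuousLinearMap (a.toLinearMap ∘ₗ B u)
  have hw (s : ℂ) : fderiv ℂ g (a + s • x) w = a (B u (dg (a + s • x))) := hdg _ _
  have hne (s : ℂ) (hs : s ≠ lam) : fderiv ℂ g (a + s • x) w = 0 := by
    rw [hw]
    have h₁ := hgs u (a + s • x)
    have h₂ := hfs (dg (a + s • x)) (a + lam • x)
    rw [hu, ← hdf, hfw, zero_mul, ← hu] at h₁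
    rw [← hdg, hgw, zero_mul, ← hu, hB.skew, map_neg, neg_eq_zero] at h₂
    simp only [add_apply, smul_apply, smul_eq_mul]
      at h₁ h₂
    refine (mul_eq_zero.mp ?_).resolve_left (sub_ne_zero.mpr hs)
    linear_combination s * h₂ - lam * h₁
  have hcont : Continuous fun s : ℂ => fderiv ℂ g (a + s • x) w :=
    (continuousOn_univ.mp (hga.fderiv_apply_const w).continuousOn).comp (by fun_prop)
  have hzero : (fun s : ℂ => fderiv ℂ g (a + s • x) w) = fun _ => 0 :=
    hcont.ext_on (dense_compl_singleton lam) continuous_const hne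
  have hmu := congrFun hzero mu
  simp only [hw] at hmu
  simp [hmu]
end

section
/- Let 𝔤 be a finite-dimensional complex Lie algebra and a ∈ 𝔤*. Let A ⊆ S(𝔤) be the ℂ-subalgebra generated by all polynomials of the form x ↦ g(a + λx), where g ranges over all semi-invariants of 𝔤 and λ ranges over ℂ. Then A is commutative with respect to both the Lie–Poisson bracket and the frozen argument bracket at a: for all p, q ∈ A, {p,q}(x) = 0 and {p,q}_a(x) = 0 for every x ∈ 𝔤*. -/
section

variable {L : Type*} [NormedAddCommGroup L] [NormedSpace ℂ L]

section PolynomialFunctions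

variable {f g : (L →L[ℂ] ℂ) → ℂ}

theorem IsPolyFun.contDiff (hf : IsPolyFun L f) : ContDiff ℂ ⊤ f := by
  induction hf using Algebra.adjoin_induction with
  | mem _ h =>
    obtain ⟨ξ, rfl⟩ := h
    exact (ContinuousLinearMap.apply ℂ ℂ ξ).contDiff
  | algebraMap r => exact contDiff_const (c := r)
  | add _ _ _ _ hp hq => exact hp.add hq
  | mul _ _ _ _ hp hq => exact hp.mul hq

theorem IsPolyFun.exists_polynomial_eval_line (hf : IsPolyFun L f) (x v : L →L[ℂ] ℂ) :
    ∃ P : Polynomial ℂ, ∀ t : ℂ, f (x + t • v) = P.eval t := by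
  induction hf using Algebra.adjoin_induction with
  | mem _ h =>
    obtain ⟨ξ, rfl⟩ := h
    exact ⟨.C (x ξ) + .C (v ξ) * .X, fun t => by simpa using mul_comm _ _⟩
  | algebraMap r => exact ⟨.C r, fun t => by simp⟩
  | add _ _ _ _ hp hq =>
    obtain ⟨P, hP⟩ := hp
    obtain ⟨Q, hQ⟩ := hq
    exact ⟨P + Q, fun t => by simp [hP, hQ]⟩
  | mul _ _ _ _ hp hq =>
    obtain ⟨P, hP⟩ := hp
    obtain ⟨Q, hQ⟩ := hq
    exact ⟨P * Q, fun t => by simp [hP, hQ]⟩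

/-- A nonzero polynomial function can be cancelled from a product with a directional derivative
of another one. -/
theorem IsPolyFun.fderiv_apply_eq_zero_of_mul_eq_zero
    (hf : IsPolyFun L f) (hf0 : f ≠ 0) (hg : IsPolyFun L g) (v : L →L[ℂ] ℂ)
    (h : ∀ x, f x * fderiv ℂ g x v = 0) (x : L →L[ℂ] ℂ) : fderiv ℂ g x v = 0 := by
  have hga : AnalyticOnNhd ℂ (fun x => fderiv ℂ g x v) Set.univ :=
    contDiff_omega_iff_analyticOnNhd.1
      ((hg.contDiff.fderiv_right (m := ⊤) le_rfl).clm_apply contDiff_const)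
  obtain ⟨y, hy⟩ := Function.ne_iff.1 hf0
  refine hga.eqOn_zero_of_preconnected_of_eventuallyEq_zero isPreconnected_univ
    (Set.mem_univ y) ?_ (Set.mem_univ x)
  filter_upwards [hf.contDiff.continuous.continuousAt.eventually_ne hy] with z hz
  exact (mul_eq_zero.1 (h z)).resolve_left hz

theorem hasDerivAt_line {p : (L →L[ℂ] ℂ) → ℂ} (hp : Differentiable ℂ p) (x v : L →L[ℂ] ℂ)
    (t : ℂ) : HasDerivAt (fun s : ℂ => p (x + s • v)) (fderiv ℂ p (x + t • v) v) t := by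
  have h1 : HasDerivAt (fun s : ℂ => x + s • v) v t := by
    simpa using ((hasDerivAt_id t).smul_const v).const_add x
  exact (hp _).hasFDerivAt.comp_hasDerivAt t h1

theorem Polynomial.derivative_eq_zero_of_C_mul_eq {P : Polynomial ℂ} {c d : ℂ} (hc : c ≠ 0)
    (h : C c * derivative P = C d * P) : derivative P = 0 := by
  by_cases hd : d = 0
  · simpa [hd, hc] using h
  by_contra hP
  have hP0 : P ≠ 0 := by
    rintro rfl
    simp at hP
  have := congrArg degree h
  rw [degree_C_mul hc, degree_C_mul hd] at this
  exact (degree_derivative_lt hP0).ne this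

end PolynomialFunctions

section SemiInvariants

variable {B : L →ₗ[ℂ] L →ₗ[ℂ] L} {f g : (L →L[ℂ] ℂ) → ℂ} {χ ψ : L →L[ℂ] ℂ}

theorem IsLieBracket.neg_swap (hB : IsLieBracket L B) (ξ η : L) : B ξ η = -B η ξ := by
  have h := hB.1 (ξ + η)
  simp only [map_add, LinearMap.add_apply, hB.1, zero_add, add_zero] at h
  exact eq_neg_of_add_eq_zero_right h

/-- Computing `{f, g}` through the semi-invariance of `f` and through that of `g`. -/
theorem IsSemiInvariant.mul_fderiv_eq (hB : IsLieBracket L B) (hf : IsSemiInvariant L B f χ)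
    (hg : IsSemiInvariant L B g ψ) (x : L →L[ℂ] ℂ) :
    f x * fderiv ℂ g x χ = -(fderiv ℂ f x ψ * g x) := by
  obtain ⟨-, -, df, hdf, hf⟩ := hf
  obtain ⟨-, -, dg, hdg, hg⟩ := hg
  have h1 := hf (dg x) x
  have h2 := hg (df x) x
  rw [hB.neg_swap, map_neg, h2] at h1
  rw [hdf, hdg, h1]
  ring

theorem IsSemiInvariant.fderiv_weight_self_s2 (hB : IsLieBracket L B)
    (hf : IsSemiInvariant L B f χ) (x : L →L[ℂ] ℂ) : fderiv ℂ f x χ = 0 := by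
  refine hf.1.fderiv_apply_eq_zero_of_mul_eq_zero hf.2.1 hf.1 χ (fun x => ?_) x
  have := hf.mul_fderiv_eq hB hf x
  linear_combination this / 2

theorem IsSemiInvariant.apply_add_smul_weight (hB : IsLieBracket L B)
    (hf : IsSemiInvariant L B f χ) (x : L →L[ℂ] ℂ) (t : ℂ) : f (x + t • χ) = f x := by
  have hd := hasDerivAt_line (hf.1.contDiff.differentiable (by simp)) x χ
  have := is_const_of_deriv_eq_zero (fun s => (hd s).differentiableAt)
    (fun s => (hd s).deriv.trans (hf.fderiv_weight_self_s2 hB _)) t 0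
  rwa [zero_smul ℂ χ, add_zero] at this

/-- The derivative of a semi-invariant in the direction of the weight of any semi-invariant
vanishes. -/
theorem IsSemiInvariant.fderiv_weight_s2 (hB : IsLieBracket L B) (hf : IsSemiInvariant L B f χ)
    (hg : IsSemiInvariant L B g ψ) (x : L →L[ℂ] ℂ) : fderiv ℂ g x χ = 0 := by
  refine hf.1.fderiv_apply_eq_zero_of_mul_eq_zero hf.2.1 hg.1 χ (fun x => ?_) x
  by_cases hx : f x = 0
  · simp [hx]
  obtain ⟨P, hP⟩ := hg.1.exists_polynomial_eval_line x χ
  have hP' (t : ℂ) : fderiv ℂ g (x + t • χ) χ = P.derivative.eval t := by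
    have hd := hasDerivAt_line (hg.1.contDiff.differentiable (by simp)) x χ t
    simp only [hP] at hd
    exact hd.unique (P.hasDerivAt t)
  have hdf (t : ℂ) : fderiv ℂ f (x + t • χ) = fderiv ℂ f x := by
    rw [← fderiv_comp_add_right]
    simp only [hf.apply_add_smul_weight hB]
  have hP0 : P.derivative = 0 := by
    refine Polynomial.derivative_eq_zero_of_C_mul_eq (d := -fderiv ℂ f x ψ) hx
      (Polynomial.funext fun t => ?_)
    have := hf.mul_fderiv_eq hB hg (x + t • χ)
    rw [hf.apply_add_smul_weight hB, hP', hdf, hP] at this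
    simpa using this
  have := hP' 0
  rw [hP0, Polynomial.eval_zero, zero_smul ℂ χ, add_zero] at this
  rw [this, mul_zero]

variable [FiniteDimensional ℂ L]

/-- The functional `η ↦ ⟨c, [ξ, η]⟩`. -/
noncomputable def bracketFunctional (B : L →ₗ[ℂ] L →ₗ[ℂ] L) (c : L →L[ℂ] ℂ) (ξ : L) :
    L →L[ℂ] ℂ :=
  c.comp (LinearMap.toContinuousLinearMap (B ξ))

@[simp]
theorem bracketFunctional_apply (c : L →L[ℂ] ℂ) (ξ η : L) :
    bracketFunctional B c ξ η = c (B ξ η) := rfl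

/-- Two semi-invariants at the points `y`, `z`: their differentials are orthogonal with respect
to every functional in the span of `y` and `z`. -/
theorem IsSemiInvariant.apply_bracket_eq_zero (hB : IsLieBracket L B)
    (hf : IsSemiInvariant L B f χ) (hg : IsSemiInvariant L B g ψ)
    {df dg : (L →L[ℂ] ℂ) → L} (hdf : RepDeriv L f df) (hdg : RepDeriv L g dg)
    (y z : L →L[ℂ] ℂ) : y (B (df y) (dg z)) = 0 ∧ z (B (df y) (dg z)) = 0 := by
  have key {h : (L →L[ℂ] ℂ) → ℂ} {θ : L →L[ℂ] ℂ} {dh : (L →L[ℂ] ℂ) → L}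
      (hh : IsSemiInvariant L B h θ) (hdh : RepDeriv L h dh) (ξ : L) (w : L →L[ℂ] ℂ) :
      w (B ξ (dh w)) = θ ξ * h w := by
    obtain ⟨-, -, dh', hdh', H⟩ := hh
    have := H ξ w
    rwa [← bracketFunctional_apply, ← hdh', hdh, bracketFunctional_apply] at this
  constructor
  · rw [hB.neg_swap, map_neg, key hf hdf, ← hdg, hf.fderiv_weight_s2 hB hg]
    simp
  · rw [key hg hdg, ← hdf, hg.fderiv_weight_s2 hB hf]
    simp

theorem IsSemiInvariant.shift_apply_bracket_of_ne (hB : IsLieBracket L B)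
    (hf : IsSemiInvariant L B f χ) (hg : IsSemiInvariant L B g ψ)
    {df dg : (L →L[ℂ] ℂ) → L} (hdf : RepDeriv L f df) (hdg : RepDeriv L g dg)
    (a x : L →L[ℂ] ℂ) {s t : ℂ} (hst : s ≠ t) :
    x (B (df (a + s • x)) (dg (a + t • x))) = 0 ∧
      a (B (df (a + s • x)) (dg (a + t • x))) = 0 := by
  obtain ⟨h1, h2⟩ := hf.apply_bracket_eq_zero hB hg hdf hdg (a + s • x) (a + t • x)
  simp only [add_apply, smul_apply, smul_eq_mul] at h1 h2
  have hx : x (B (df (a + s • x)) (dg (a + t • x))) = 0 := by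
    refine (mul_eq_zero.1 ?_).resolve_left (sub_ne_zero.2 hst)
    linear_combination h1 - h2
  refine ⟨hx, ?_⟩
  rwa [hx, mul_zero, add_zero] at h1

theorem IsSemiInvariant.shift_apply_bracket (hB : IsLieBracket L B)
    (hf : IsSemiInvariant L B f χ) (hg : IsSemiInvariant L B g ψ)
    {df dg : (L →L[ℂ] ℂ) → L} (hdf : RepDeriv L f df) (hdg : RepDeriv L g dg)
    (a x : L →L[ℂ] ℂ) (s t : ℂ) :
    x (B (df (a + s • x)) (dg (a + t • x))) = 0 ∧
      a (B (df (a + s • x)) (dg (a + t • x))) = 0 := by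
  have hcont (c : L →L[ℂ] ℂ) :
      Continuous fun r : ℂ => c (B (df (a + s • x)) (dg (a + r • x))) := by
    simp only [← bracketFunctional_apply, ← hdg _ _]
    have := hg.1.contDiff.continuous_fderiv (by simp)
    fun_prop
  have hdense : Dense ({s}ᶜ : Set ℂ) := dense_compl_singleton s
  have hne (r : ℂ) (hr : r ∈ ({s}ᶜ : Set ℂ)) :=
    hf.shift_apply_bracket_of_ne hB hg hdf hdg a x (Ne.symm hr)
  exact ⟨congrFun ((hcont x).ext_on hdense continuous_const fun r hr => (hne r hr).1) t,
    congrFun ((hcont a).ext_on hdense continuous_const fun r hr => (hne r hr).2) t⟩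

end SemiInvariants

/-- A directional derivative that vanishes on a set of differentiable functions vanishes on the
algebra it generates. -/
theorem fderiv_apply_eq_zero_of_mem_adjoin {E : Type*} [NormedAddCommGroup E] [NormedSpace ℂ E]
    {S : Set (E → ℂ)} {x v : E}
    (hS : ∀ p ∈ S, DifferentiableAt ℂ p x ∧ fderiv ℂ p x v = 0) {p : E → ℂ}
    (hp : p ∈ Algebra.adjoin ℂ S) : fderiv ℂ p x v = 0 := by
  suffices DifferentiableAt ℂ p x ∧ fderiv ℂ p x v = 0 from this.2
  induction hp using Algebra.adjoin_induction with
  | mem p h => exact hS p h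
  | algebraMap r =>
    exact ⟨differentiableAt_const r, by
      rw [show algebraMap ℂ (E → ℂ) r = fun _ => r from rfl]; simp⟩
  | add p q _ _ hp hq =>
    exact ⟨hp.1.add hq.1, by simp [fderiv_add hp.1 hq.1, hp.2, hq.2]⟩
  | mul p q _ _ hp hq =>
    exact ⟨hp.1.mul hq.1, by simp [fderiv_mul hp.1 hq.1, hp.2, hq.2]⟩

theorem hasFDerivAt_shift {g : (L →L[ℂ] ℂ) → ℂ} (hg : Differentiable ℂ g) (a x : L →L[ℂ] ℂ)
    (t : ℂ) :
    HasFDerivAt (fun y => g (a + t • y)) (t • fderiv ℂ g (a + t • x)) x := by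
  have h1 : HasFDerivAt (fun y : L →L[ℂ] ℂ => a + t • y)
      (t • ContinuousLinearMap.id ℂ (L →L[ℂ] ℂ)) x :=
    ((hasFDerivAt_id x).const_smul t).const_add a
  exact ((hg (a + t • x)).hasFDerivAt.comp x h1).congr_fderiv (by ext v; simp)

end

/-- The subalgebra generated by all shifts `x ↦ g(a + λx)` of all semi-invariants `g` of `𝔤`
is commutative w.r.t. both the Lie–Poisson bracket `{p,q}(x) = ⟨x, [dp(x), dq(x)]⟩`
and the frozen argument bracket `{p,q}_a(x) = ⟨a, [dp(x), dq(x)]⟩`. -/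
theorem algebra_of_shifts_of_semiInvariants_biInvolutive
    {L : Type*} [NormedAddCommGroup L] [NormedSpace ℂ L] [FiniteDimensional ℂ L]
    (B : L →ₗ[ℂ] L →ₗ[ℂ] L) (hB : IsLieBracket L B)
    (a : L →L[ℂ] ℂ)
    (A : Subalgebra ℂ ((L →L[ℂ] ℂ) → ℂ))
    (hA : A = Algebra.adjoin ℂ
      {q : (L →L[ℂ] ℂ) → ℂ | ∃ (g : (L →L[ℂ] ℂ) → ℂ) (χ : L →L[ℂ] ℂ) (lam : ℂ),
        IsSemiInvariant L B g χ ∧ q = fun x => g (a + lam • x)}) :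
    ∀ p ∈ A, ∀ q ∈ A, ∀ dp dq : (L →L[ℂ] ℂ) → L,
      RepDeriv L p dp → RepDeriv L q dq →
      ∀ x : L →L[ℂ] ℂ, x (B (dp x) (dq x)) = 0 ∧ a (B (dp x) (dq x)) = 0 := by
  subst hA
  intro p hp q hq dp dq hdp hdq x
  suffices H : ∀ c : L →L[ℂ] ℂ, (c = x ∨ c = a) → c (B (dp x) (dq x)) = 0 from
    ⟨H x (.inl rfl), H a (.inr rfl)⟩
  intro c hc
  rw [← bracketFunctional_apply, ← hdq]
  refine fderiv_apply_eq_zero_of_mem_adjoin ?_ hq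
  rintro _ ⟨g, ψ, t, hg, rfl⟩
  have hg' := hasFDerivAt_shift (hg.1.contDiff.differentiable (by simp)) a x t
  refine ⟨hg'.differentiableAt, ?_⟩
  obtain ⟨dg, hdg, -⟩ := hg.2.2
  rw [hg'.fderiv, smul_apply, hdg, bracketFunctional_apply, hB.neg_swap,
    map_neg, ← bracketFunctional_apply, ← hdp,
    fderiv_apply_eq_zero_of_mem_adjoin ?_ hp, neg_zero, smul_zero]
  rintro _ ⟨f, χ, s, hf, rfl⟩
  have hf' := hasFDerivAt_shift (hf.1.contDiff.differentiable (by simp)) a x s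
  refine ⟨hf'.differentiableAt, ?_⟩
  obtain ⟨df, hdf, -⟩ := hf.2.2
  have h := hg.shift_apply_bracket hB hf hdg hdf a x t s
  rw [hf'.fderiv, smul_apply, hdf, bracketFunctional_apply]
  obtain rfl | rfl := hc
  · rw [h.1, smul_zero]
  · rw [h.2, smul_zero]
end

section
/- Let 𝔤 be a finite-dimensional complex Lie algebra, let g ∈ S(𝔤) be a semi-invariant with weight χ ∈ 𝔤*, and let a ∈ 𝔤*. Let U ⊆ 𝔤* be open and let λ: U → ℂ be an analytic function satisfying g(x − λ(x)a) = 0 for all x ∈ U. Let x₀ ∈ U be a point at which ⟨a, dg(x₀ − λ(x₀)a)⟩ ≠ 0. Then dλ(x₀) lies in the kernel of the skew-symmetric bilinear form 𝒜_{x₀} − λ(x₀)𝒜_a on 𝔤, i.e. ⟨x₀ − λ(x₀)a, [dλ(x₀), η]⟩ = 0 for every η ∈ 𝔤. -/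
/-- Polynomial functions on the dual space are differentiable. -/
theorem IsPolyFun.differentiable {L : Type*} [NormedAddCommGroup L] [NormedSpace ℂ L]
    {p : (L →L[ℂ] ℂ) → ℂ} (hp : IsPolyFun L p) : Differentiable ℂ p := by
  induction hp using Algebra.adjoin_induction with
  | mem f hf =>
    obtain ⟨ξ, rfl⟩ := hf
    exact (ContinuousLinearMap.apply ℂ ℂ ξ).differentiable
  | algebraMap r => exact differentiable_const r
  | add f h _ _ hf hh => exact hf.add hh
  | mul f h _ _ hf hh => exact hf.mul hh

/-- Implicit differentiation of `g (x - λ(x) a) = 0`: the differential of `g` is the multiple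
`⟨a, dg⟩ dλ` of the differential of the root `λ`. -/
theorem RepDeriv.eq_smul_of_root {L : Type*} [NormedAddCommGroup L] [NormedSpace ℂ L]
    {g : (L →L[ℂ] ℂ) → ℂ} {dg : (L →L[ℂ] ℂ) → L} (hdg : RepDeriv L g dg)
    {a x : L →L[ℂ] ℂ} {lam : (L →L[ℂ] ℂ) → ℂ}
    (hg : DifferentiableAt ℂ g (x - lam x • a)) (hlam : DifferentiableAt ℂ lam x)
    (hroot : ∀ᶠ y in nhds x, g (y - lam y • a) = 0)
    {dl : L} (hdl : ∀ v : L →L[ℂ] ℂ, fderiv ℂ lam x v = v dl) :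
    dg (x - lam x • a) = a (dg (x - lam x • a)) • dl := by
  have hcomp := hg.hasFDerivAt.comp x
    ((hasFDerivAt_id x).sub (hlam.hasFDerivAt.smul_const a))
  have hzero := hcomp.unique ((hasFDerivAt_const (0 : ℂ) x).congr_of_eventuallyEq hroot)
  refine SeparatingDual.eq_iff_forall_dual_eq (R := ℂ) |>.2 fun v => ?_
  have hv := DFunLike.congr_fun hzero v
  simp only [ContinuousLinearMap.comp_apply, sub_apply, ContinuousLinearMap.id_apply,
    ContinuousLinearMap.smulRight_apply, zero_apply, hdl, hdg _ _,
    smul_apply, smul_eq_mul] at hv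
  rw [map_smul, smul_eq_mul]
  linear_combination hv

/-- Lemma on roots of semi-invariants, kernel form: if `λ : U → ℂ` is analytic with
`g(x − λ(x)a) = 0` on `U`, and `⟨a, dg(x₀ − λ(x₀)a)⟩ ≠ 0` at a point `x₀ ∈ U`, then
`dλ(x₀)` lies in the kernel of the skew-symmetric bilinear form `𝒜_{x₀} − λ(x₀)𝒜_a`
on `𝔤`, i.e. `⟨x₀ − λ(x₀)a, [dλ(x₀), η]⟩ = 0` for every `η ∈ 𝔤`. -/
theorem root_of_semiInvariant_dl_in_kernel
    {L : Type*} [NormedAddCommGroup L] [NormedSpace ℂ L] [FiniteDimensional ℂ L]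
    (B : L →ₗ[ℂ] L →ₗ[ℂ] L) (hB : IsLieBracket L B)
    (g : (L →L[ℂ] ℂ) → ℂ) (χ : L →L[ℂ] ℂ)
    (hpoly : IsPolyFun L g) (hg0 : g ≠ 0)
    (dg : (L →L[ℂ] ℂ) → L) (hdg : RepDeriv L g dg)
    (hsemi : ∀ (ξ : L) (x : L →L[ℂ] ℂ), x (B ξ (dg x)) = χ ξ * g x)
    (a : L →L[ℂ] ℂ)
    (U : Set (L →L[ℂ] ℂ)) (hU : IsOpen U)
    (lam : (L →L[ℂ] ℂ) → ℂ) (hlam : AnalyticOnNhd ℂ lam U)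
    (hroot : ∀ x ∈ U, g (x - lam x • a) = 0)
    (x₀ : L →L[ℂ] ℂ) (hx₀ : x₀ ∈ U)
    (hnd : a (dg (x₀ - lam x₀ • a)) ≠ 0)
    (dl : L)
    (hdl : ∀ v : L →L[ℂ] ℂ, fderiv ℂ lam x₀ v = v dl) :
    ∀ η : L, (x₀ - lam x₀ • a) (B dl η) = 0 := by
  intro η
  have hdl_smul := hdg.eq_smul_of_root hpoly.differentiable.differentiableAt
    (hlam x₀ hx₀).differentiableAt (Filter.eventually_of_mem (hU.mem_nhds hx₀) hroot) hdl
  have hη := hsemi η (x₀ - lam x₀ • a)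
  rw [hroot x₀ hx₀, mul_zero, hdl_smul, map_smul, map_smul, smul_eq_mul] at hη
  have hskew : B dl η = -B η dl := (LinearMap.IsAlt.neg (B := B) hB.1 η dl).symm
  rw [hskew, map_neg, (mul_eq_zero.1 hη).resolve_left hnd, neg_zero]
end
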